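/- Let G be a graph on n vertices with adjacency matrix A and stability number α(G), let k be a real scalar with α(G) < k, and let C > 0 be a real scalar. Then the origin is the unique local minimizer of the quadratic form q_{A,k}(x) := x^T (kA + kI - J) x over the polytope {x ∈ ℝ^n : x ≥ 0, Σ_{i=1}^n x_i ≤ C}. -/

import Mathlib

open Matrix
open scoped RealInnerProductSpace

/-- The stability (independence) number of a graph: the size of the largest set of
pairwise non-adjacent vertices. -/
noncomputable def stabilityNumber {V : Type*} (G : SimpleGraph V) : ℕ :=
  sSup {k | ∃ s : Finset V, s.card = k ∧ ∀ i ∈ s, ∀ j ∈ s, i ≠ j → ¬ G.Adj i j}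

/-- The matrix `M_{A,k} = k A + k I - J`, where `J` is the all-ones matrix. -/
noncomputable def MAk {n : ℕ} (A : Matrix (Fin n) (Fin n) ℝ) (k : ℝ) : Matrix (Fin n) (Fin n) ℝ :=
  k • A + k • (1 : Matrix (Fin n) (Fin n) ℝ) - Matrix.of (fun _ _ => (1 : ℝ))

/-- Entrywise square of a vector. -/
def vsq {n : ℕ} (x : Fin n → ℝ) : Fin n → ℝ := fun i => (x i) ^ 2

/-- A symmetric matrix `M` is copositive if `xᵀ M x ≥ 0` for all entrywise nonnegative `x`. -/
def Copositive {n : ℕ} (M : Matrix (Fin n) (Fin n) ℝ) : Prop :=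
  ∀ x : Fin n → ℝ, (∀ i, 0 ≤ x i) → 0 ≤ x ⬝ᵥ M.mulVec x

/-- The quartic form `p_M(x) = (x²)ᵀ M (x²)`. -/
noncomputable def quarticForm {n : ℕ} (M : Matrix (Fin n) (Fin n) ℝ) :
    EuclideanSpace ℝ (Fin n) → ℝ :=
  fun x => vsq x ⬝ᵥ M.mulVec (vsq x)

/-- The quadratic form `q_M(x) = xᵀ M x`. -/
noncomputable def quadForm {n : ℕ} (M : Matrix (Fin n) (Fin n) ℝ) :
    EuclideanSpace ℝ (Fin n) → ℝ :=
  fun x => x ⬝ᵥ M.mulVec x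

/-- `xm` is a local minimizer of `f` over `Ω`: `xm ∈ Ω` and there is `ε > 0` such that
`f xm ≤ f x` for all `x ∈ Ω` with `‖x - xm‖ ≤ ε` (Euclidean norm). -/
def IsLocalMinimizer {n : ℕ} (f : EuclideanSpace ℝ (Fin n) → ℝ)
    (Ω : Set (EuclideanSpace ℝ (Fin n))) (xm : EuclideanSpace ℝ (Fin n)) : Prop :=
  xm ∈ Ω ∧ ∃ ε > 0, ∀ x ∈ Ω, ‖x - xm‖ ≤ ε → f xm ≤ f x

/-- `xm` is a strict local minimizer of `f` over `Ω`: `xm ∈ Ω` and there is `ε > 0` such that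
`f xm < f x` for all `x ∈ Ω` with `x ≠ xm` and `‖x - xm‖ ≤ ε` (Euclidean norm). -/
def IsStrictLocalMinimizer {n : ℕ} (f : EuclideanSpace ℝ (Fin n) → ℝ)
    (Ω : Set (EuclideanSpace ℝ (Fin n))) (xm : EuclideanSpace ℝ (Fin n)) : Prop :=
  xm ∈ Ω ∧ ∃ ε > 0, ∀ x ∈ Ω, x ≠ xm → ‖x - xm‖ ≤ ε → f xm < f x

/-!
If `v` minimizes the weighted degree `((A + I) x)_v` of a graph with `x ≥ 0`, deleting the closed
neighbourhood of `v` lowers the independence number and removes at least `((A + I) x)_v²` from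
`xᵀ (A + I) x`. With the Cauchy–Schwarz inequality, induction gives the Motzkin–Straus inequality
`(∑ xᵢ)² ≤ α(G) xᵀ (A + I) x`, so `q_{A,k}` is strictly copositive for `k > α(G)`. A
homogeneous function that is positive at `x ≠ 0` decreases along the segment from `x` to `0`, so no
such `x` is a local minimizer over a set which is star-shaped about `0`.
-/

open scoped Topology

section MotzkinStraus

variable {V R : Type*} {G : SimpleGraph V}

theorem stabilityNumber_eq_indepNum (G : SimpleGraph V) : stabilityNumber G = G.indepNum := by
  simp only [stabilityNumber, SimpleGraph.indepNum, SimpleGraph.isNIndepSet_iff, Set.Pairwise,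
    Finset.mem_coe, and_comm]

theorem eq_empty_of_indepSetFreeOn_one {s : Set V} (h : G.IndepSetFreeOn s 1) : s = ∅ := by
  refine Set.eq_empty_of_forall_notMem fun v hv => h (t := {v}) ?_ ⟨?_, Finset.card_singleton v⟩
  · simpa only [Finset.coe_singleton, Set.singleton_subset_iff] using hv
  · simpa only [Finset.coe_singleton] using Set.pairwise_singleton v _

theorem indepSetFreeOn_sep_not_closedNbhd {s : Set V} {m : ℕ} {v : V} (hv : v ∈ s)
    (h : G.IndepSetFreeOn s (m + 1)) :
    G.IndepSetFreeOn {w ∈ s | ¬(w = v ∨ G.Adj v w)} m := by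
  classical
  intro t hts ht
  have hvt : v ∉ t := fun hvt => (hts hvt).2 (Or.inl rfl)
  refine h (t := insert v t) ?_ ⟨?_, ?_⟩
  · rw [Finset.coe_insert]
    exact Set.insert_subset hv fun w hw => (hts hw).1
  · rw [Finset.coe_insert]
    refine ht.isIndepSet.insert fun w hw _ => ?_
    have hvw : ¬G.Adj v w := fun hvw => (hts hw).2 (Or.inr hvw)
    exact ⟨hvw, fun hwv => hvw hwv.symm⟩
  · rw [Finset.card_insert_of_notMem hvt, ht.card_eq]

theorem add_sq_le_succ_mul_sq_add [CommRing R] [LinearOrder R] [IsStrictOrderedRing R]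
    {a b c : R} {m : ℕ} (hc : 0 ≤ c) (h : b ^ 2 ≤ m * c) :
    (a + b) ^ 2 ≤ (m + 1 : ℕ) * (a ^ 2 + c) := by
  suffices hab : 2 * a * b ≤ m * a ^ 2 + c by
    push_cast
    linarith
  obtain rfl | hm := m.eq_zero_or_pos
  · have hb : b = 0 := by simpa using h
    simpa [hb] using hc
  · refine le_of_mul_le_mul_left ?_ (Nat.cast_pos.2 hm : (0 : R) < m)
    linarith [sq_nonneg (m * a - b)]

variable [DecidableEq V] [DecidableRel G.Adj]

variable (G) in
/-- The weighted degree of `v` in the subgraph of `G` induced on `U`: the total `x`-weight of the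
part of the closed neighbourhood of `v` that lies in `U`. For `U = V` it is the entry at `v` of
`(A + I) x`. -/
def closedNbhdSum [AddCommMonoid R] (U : Finset V) (x : V → R) (v : V) : R :=
  ∑ w ∈ U with w = v ∨ G.Adj v w, x w

theorem adjMatrix_add_one_mulVec [Fintype V] [NonAssocSemiring R] (x : V → R) (v : V) :
    ((G.adjMatrix R + 1) *ᵥ x) v = closedNbhdSum G Finset.univ x v := by
  rw [closedNbhdSum, Finset.sum_filter]
  refine Finset.sum_congr rfl fun w _ => ?_
  obtain rfl | hne := eq_or_ne w v
  · simp
  · simp [hne, hne.symm, SimpleGraph.adjMatrix_apply]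

theorem sum_mul_closedNbhdSum_nonneg [Semiring R] [PartialOrder R] [IsOrderedRing R]
    {x : V → R} (hx : 0 ≤ x) (U : Finset V) : 0 ≤ ∑ v ∈ U, x v * closedNbhdSum G U x v :=
  Finset.sum_nonneg fun v _ => mul_nonneg (hx v) (Finset.sum_nonneg fun w _ => hx w)

theorem closedNbhdSum_mono [AddCommMonoid R] [PartialOrder R] [IsOrderedAddMonoid R]
    {x : V → R} (hx : 0 ≤ x) {U W : Finset V} (h : W ⊆ U) (v : V) :
    closedNbhdSum G W x v ≤ closedNbhdSum G U x v :=
  Finset.sum_le_sum_of_subset_of_nonneg (Finset.filter_subset_filter _ h) fun w _ _ => hx w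

theorem sq_closedNbhdSum_add_le [CommSemiring R] [PartialOrder R] [IsOrderedRing R]
    {x : V → R} (hx : 0 ≤ x) {U W : Finset V} {v : V} (hW : W = {w ∈ U | ¬(w = v ∨ G.Adj v w)})
    (hv : ∀ w ∈ U, closedNbhdSum G U x v ≤ closedNbhdSum G U x w) :
    closedNbhdSum G U x v ^ 2 + ∑ w ∈ W, x w * closedNbhdSum G W x w ≤
      ∑ w ∈ U, x w * closedNbhdSum G U x w := by
  have hWU : W ⊆ U := hW ▸ Finset.filter_subset _ U
  calc
    _ = ∑ w ∈ U with w = v ∨ G.Adj v w, x w * closedNbhdSum G U x v +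
          ∑ w ∈ W, x w * closedNbhdSum G W x w := by
      rw [← Finset.sum_mul, ← closedNbhdSum, sq]
    _ ≤ ∑ w ∈ U with w = v ∨ G.Adj v w, x w * closedNbhdSum G U x w +
          ∑ w ∈ W, x w * closedNbhdSum G U x w := by
      gcongr with w hw w
      · exact hx w
      · exact hv w (Finset.mem_of_mem_filter w hw)
      · exact hx w
      · exact closedNbhdSum_mono hx hWU w
    _ = ∑ w ∈ U, x w * closedNbhdSum G U x w := by
      rw [hW, Finset.sum_filter_add_sum_filter_not]

variable [CommRing R] [LinearOrder R] [IsStrictOrderedRing R] {x : V → R}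

theorem sq_sum_le_mul_sum_closedNbhdSum (hx : 0 ≤ x) {m : ℕ} {U : Finset V}
    (hU : G.IndepSetFreeOn U (m + 1)) :
    (∑ v ∈ U, x v) ^ 2 ≤ m * ∑ v ∈ U, x v * closedNbhdSum G U x v := by
  induction m generalizing U with
  | zero => simp [Finset.coe_eq_empty.1 (eq_empty_of_indepSetFreeOn_one hU)]
  | succ m ih =>
    obtain rfl | hne := U.eq_empty_or_nonempty
    · simp
    obtain ⟨v, hvU, hv⟩ := U.exists_min_image (closedNbhdSum G U x) hne
    set W : Finset V := {w ∈ U | ¬(w = v ∨ G.Adj v w)} with hW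
    set Q : R := ∑ w ∈ W, x w * closedNbhdSum G W x w
    have hQ : 0 ≤ Q := sum_mul_closedNbhdSum_nonneg hx W
    have hWfree : G.IndepSetFreeOn W (m + 1) := by
      simpa only [hW, Finset.coe_filter, Finset.mem_coe] using
        indepSetFreeOn_sep_not_closedNbhd hvU hU
    calc (∑ w ∈ U, x w) ^ 2
        = (closedNbhdSum G U x v + ∑ w ∈ W, x w) ^ 2 := by
          rw [closedNbhdSum, hW, Finset.sum_filter_add_sum_filter_not]
      _ ≤ (m + 1 : ℕ) * (closedNbhdSum G U x v ^ 2 + Q) :=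
          add_sq_le_succ_mul_sq_add hQ (ih hWfree)
      _ ≤ (m + 1 : ℕ) * ∑ w ∈ U, x w * closedNbhdSum G U x w := by
          gcongr
          exact sq_closedNbhdSum_add_le hx hW hv

theorem sq_sum_le_indepNum_mul_dotProduct [Fintype V] (hx : 0 ≤ x) :
    (∑ v, x v) ^ 2 ≤ G.indepNum * (x ⬝ᵥ (G.adjMatrix R + 1) *ᵥ x) := by
  have hfree : G.IndepSetFreeOn (Finset.univ : Finset V) (G.indepNum + 1) := fun _ _ ht =>
    Nat.not_succ_le_self _ (ht.card_eq ▸ ht.isIndepSet.card_le_indepNum)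
  simpa only [dotProduct, adjMatrix_add_one_mulVec] using sq_sum_le_mul_sum_closedNbhdSum hx hfree

end MotzkinStraus

section Homogeneous

variable {E : Type*} [AddCommGroup E] [Module ℝ E] [TopologicalSpace E] [ContinuousSMul ℝ E]
  {f : E → ℝ} {s : Set E} {d : ℕ}

theorem not_isLocalMinOn_of_homogeneous {x : E} (hs : StarConvex ℝ 0 s) (hx : x ∈ s)
    (hd : d ≠ 0) (hf : ∀ t : ℝ, 0 ≤ t → f (t • x) = t ^ d * f x) (hpos : 0 < f x) :
    ¬IsLocalMinOn f s x := by
  intro hmin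
  have hlim : Filter.Tendsto (fun t : ℝ => t • x) (𝓝[<] 1) (𝓝[s] x) := by
    refine tendsto_nhdsWithin_iff.2 ⟨?_, ?_⟩
    · have hcont : ContinuousAt (fun t : ℝ => t • x) 1 := by fun_prop
      simpa only [one_smul] using hcont.tendsto.mono_left nhdsWithin_le_nhds
    · filter_upwards [Ioo_mem_nhdsLT zero_lt_one] with t ht
      exact starConvex_zero_iff.1 hs hx ht.1.le ht.2.le
  obtain ⟨t, hle, ht⟩ := ((hlim.eventually hmin).and (Ioo_mem_nhdsLT zero_lt_one)).exists
  have hlt : t ^ d * f x < f x := mul_lt_of_lt_one_left hpos (pow_lt_one₀ ht.1.le ht.2 hd)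
  exact (hf t ht.1.le ▸ hle).not_gt hlt

theorem isLocalMinOn_iff_eq_zero_of_homogeneous (hs : StarConvex ℝ 0 s) (hd : d ≠ 0)
    (hf : ∀ t : ℝ, 0 ≤ t → ∀ x, f (t • x) = t ^ d * f x) (hpos : ∀ x ∈ s, x ≠ 0 → 0 < f x)
    {x : E} (hx : x ∈ s) : IsLocalMinOn f s x ↔ x = 0 := by
  constructor
  · intro hmin
    by_contra hne
    exact not_isLocalMinOn_of_homogeneous hs hx hd (hf · · x) (hpos x hx hne) hmin
  · rintro rfl
    have hf0 : f 0 = 0 := by simpa [hd] using hf 0 le_rfl 0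
    refine IsMinOn.localize fun y hy => ?_
    obtain rfl | hne := eq_or_ne y 0
    · exact le_refl (f 0)
    · exact hf0.trans_le (hpos y hy hne).le

end Homogeneous

section QuadForm

variable {n : ℕ}

theorem isLocalMinimizer_iff {f : EuclideanSpace ℝ (Fin n) → ℝ}
    {Ω : Set (EuclideanSpace ℝ (Fin n))} {x : EuclideanSpace ℝ (Fin n)} :
    IsLocalMinimizer f Ω x ↔ x ∈ Ω ∧ IsLocalMinOn f Ω x := by
  rw [IsLocalMinimizer, IsLocalMinOn, IsMinFilter,
    (nhdsWithin_hasBasis Metric.nhds_basis_closedBall Ω).eventually_iff]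
  simp only [Set.mem_inter_iff, mem_closedBall_iff_norm, and_comm, and_imp, gt_iff_lt]

theorem quadForm_smul (M : Matrix (Fin n) (Fin n) ℝ) (t : ℝ) (x : EuclideanSpace ℝ (Fin n)) :
    quadForm M (t • x) = t ^ 2 * quadForm M x := by
  simp only [quadForm, WithLp.ofLp_smul, mulVec_smul, smul_dotProduct, dotProduct_smul,
    smul_eq_mul]
  ring

theorem quadForm_MAk (A : Matrix (Fin n) (Fin n) ℝ) (k : ℝ) (x : EuclideanSpace ℝ (Fin n)) :
    quadForm (MAk A k) x = k * (x ⬝ᵥ (A + 1) *ᵥ x) - (∑ i, x i) ^ 2 := by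
  have hJ : x ⬝ᵥ (Matrix.of fun _ _ : Fin n => (1 : ℝ)) *ᵥ x = (∑ i, x i) ^ 2 := by
    simp [dotProduct, mulVec, ← Finset.sum_mul, sq]
  rw [quadForm, MAk, sub_mulVec, dotProduct_sub, hJ, ← smul_add, smul_mulVec, dotProduct_smul,
    smul_eq_mul]

theorem quadForm_MAk_pos (G : SimpleGraph (Fin n)) [DecidableRel G.Adj] {k : ℝ}
    (hk : G.indepNum < k) {x : EuclideanSpace ℝ (Fin n)} (hx : ∀ i, 0 ≤ x i) (hne : x ≠ 0) :
    0 < quadForm (MAk (G.adjMatrix ℝ) k) x := by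
  have hsum : 0 < ∑ i, x i := by
    obtain ⟨i, hi⟩ : ∃ i, x i ≠ 0 := by
      contrapose! hne
      exact PiLp.ext hne
    exact Finset.sum_pos' (fun i _ => hx i) ⟨i, Finset.mem_univ i, (hx i).lt_of_ne' hi⟩
  have hMS := sq_sum_le_indepNum_mul_dotProduct (G := G) (x := x) hx
  have hq : 0 < x ⬝ᵥ (G.adjMatrix ℝ + 1) *ᵥ x :=
    pos_of_mul_pos_right ((pow_pos hsum 2).trans_le hMS) (Nat.cast_nonneg _)
  rw [quadForm_MAk, sub_pos]
  exact hMS.trans_lt (mul_lt_mul_of_pos_right hk hq)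

theorem starConvex_zero_nonneg_sum_le (C : ℝ) :
    StarConvex ℝ 0 {x : EuclideanSpace ℝ (Fin n) | (∀ i, 0 ≤ x i) ∧ ∑ i, x i ≤ C} := by
  rw [starConvex_zero_iff]
  rintro x ⟨hx, hxC⟩ t ht ht1
  refine ⟨fun i => mul_nonneg ht (hx i), ?_⟩
  simp only [PiLp.smul_apply, smul_eq_mul, ← Finset.mul_sum]
  exact (mul_le_of_le_one_left (Finset.sum_nonneg fun i _ => hx i) ht1).trans hxC

theorem origin_unique_localMinimizer_general (G : SimpleGraph (Fin n)) [DecidableRel G.Adj]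
    {k : ℝ} (hk : (stabilityNumber G : ℝ) < k) {Ω : Set (EuclideanSpace ℝ (Fin n))}
    (hΩ : StarConvex ℝ 0 Ω) (hzero : 0 ∈ Ω) (hnonneg : ∀ x ∈ Ω, ∀ i, 0 ≤ x i)
    (xm : EuclideanSpace ℝ (Fin n)) :
    IsLocalMinimizer (quadForm (MAk (G.adjMatrix ℝ) k)) Ω xm ↔ xm = 0 := by
  rw [stabilityNumber_eq_indepNum] at hk
  have hiff {x} (hx : x ∈ Ω) : IsLocalMinOn (quadForm (MAk (G.adjMatrix ℝ) k)) Ω x ↔ x = 0 :=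
    isLocalMinOn_iff_eq_zero_of_homogeneous hΩ two_ne_zero (fun t _ => quadForm_smul _ t)
      (fun y hy => quadForm_MAk_pos G hk (hnonneg y hy)) hx
  rw [isLocalMinimizer_iff]
  exact ⟨fun h => (hiff h.1).1 h.2, fun h => h ▸ ⟨hzero, (hiff hzero).2 rfl⟩⟩

end QuadForm

/-- If `α(G) < k` and `C > 0`, then the origin is the unique local minimizer of
`q_{A,k}` over the polytope `{x : x ≥ 0, ∑ᵢ xᵢ ≤ C}`. -/
theorem origin_unique_localMinimizer {n : ℕ} (G : SimpleGraph (Fin n)) [DecidableRel G.Adj]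
    (k : ℝ) (hk : (stabilityNumber G : ℝ) < k) (C : ℝ) (hC : 0 < C) :
    IsLocalMinimizer (quadForm (MAk (G.adjMatrix ℝ) k))
        {x : EuclideanSpace ℝ (Fin n) | (∀ i, 0 ≤ x i) ∧ ∑ i, x i ≤ C} 0 ∧
    ∀ xm, IsLocalMinimizer (quadForm (MAk (G.adjMatrix ℝ) k))
        {x : EuclideanSpace ℝ (Fin n) | (∀ i, 0 ≤ x i) ∧ ∑ i, x i ≤ C} xm → xm = 0 := by
  have hiff := origin_unique_localMinimizer_general G hk
    (starConvex_zero_nonneg_sum_le C) ⟨fun _ => le_rfl, by simpa using hC.le⟩ fun _ hx => hx.1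
  exact ⟨(hiff 0).2 rfl, fun xm => (hiff xm).1⟩
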